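/- arXiv:2004.02243 — 3 statements merged into one kernel-verified Lean document; each statement's English description precedes it below -/
import Mathlib

section
/- Künneth formula: let (V₁, α₁) and (V₂, α₂) be cochain complexes of real vector spaces and let (V, α) be their tensor product complex, with V^n := ⊕_{p+q=n} V₁^p ⊗ V₂^q and α^n equal on the summand V₁^p ⊗ V₂^q to α₁^p ⊗ id + (−1)^p id ⊗ α₂^q. Then for every n there is a linear isomorphism of real vector spaces H^n(V) ≅ ⊕_{p+q=n} H^p(V₁) ⊗ H^q(V₂). -/
open TensorProduct DirectSum

/-- The index set `{(p, q) : p + q = n}` of the degree-`n` part of a tensor product of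
graded objects. -/
abbrev TIdx (n : ℕ) : Type := {pq : ℕ × ℕ // pq.1 + pq.2 = n}

variable (V₁ V₂ : ℕ → Type) [∀ p, AddCommGroup (V₁ p)] [∀ p, Module ℝ (V₁ p)]
  [∀ p, AddCommGroup (V₂ p)] [∀ p, Module ℝ (V₂ p)]

/-- The degree-`n` part `V^n = ⊕_{p+q=n} V₁^p ⊗ V₂^q` of the tensor product of two
graded real vector spaces. -/
abbrev TObj (n : ℕ) : Type := ⨁ pq : TIdx n, (V₁ pq.1.1 ⊗[ℝ] V₂ pq.1.2)

/-- The differential of the tensor product complex: on the summand `V₁^p ⊗ V₂^q`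
(`p + q = n`) it is `α₁^p ⊗ id + (-1)^p id ⊗ α₂^q`, landing in
`V₁^{p+1} ⊗ V₂^q ⊕ V₁^p ⊗ V₂^{q+1}`. -/
noncomputable def tAlpha (α₁ : ∀ p, V₁ p →ₗ[ℝ] V₁ (p + 1))
    (α₂ : ∀ p, V₂ p →ₗ[ℝ] V₂ (p + 1)) (n : ℕ) :
    TObj V₁ V₂ n →ₗ[ℝ] TObj V₁ V₂ (n + 1) :=
  DirectSum.toModule ℝ (TIdx n) (TObj V₁ V₂ (n + 1)) fun pq =>
    ((DirectSum.lof ℝ (TIdx (n + 1)) (fun rs => V₁ rs.1.1 ⊗[ℝ] V₂ rs.1.2)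
        ⟨(pq.1.1 + 1, pq.1.2), by have := pq.2; omega⟩).comp
      (TensorProduct.map (α₁ pq.1.1) LinearMap.id))
    + ((-1 : ℝ) ^ pq.1.1) •
      ((DirectSum.lof ℝ (TIdx (n + 1)) (fun rs => V₁ rs.1.1 ⊗[ℝ] V₂ rs.1.2)
        ⟨(pq.1.1, pq.1.2 + 1), by have := pq.2; omega⟩).comp
      (TensorProduct.map LinearMap.id (α₂ pq.1.2)))

/-- The coboundaries of a cochain complex: `B⁰ = 0` and `B^{n+1} = range α^n`. -/
noncomputable def Bnd (W : ℕ → Type) [∀ p, AddCommGroup (W p)] [∀ p, Module ℝ (W p)]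
    (β : ∀ p, W p →ₗ[ℝ] W (p + 1)) : ∀ n, Submodule ℝ (W n)
  | 0 => ⊥
  | (n + 1) => LinearMap.range (β n)

/-- The cohomology `H^n = ker α^n / im α^{n-1}` of a cochain complex of real vector
spaces (with `im α^{-1} := 0`). -/
abbrev Hcoh (W : ℕ → Type) [∀ p, AddCommGroup (W p)] [∀ p, Module ℝ (W p)]
    (β : ∀ p, W p →ₗ[ℝ] W (p + 1)) (n : ℕ) : Type :=
  ↥(LinearMap.ker (β n)) ⧸
    Submodule.comap (LinearMap.ker (β n)).subtype (Bnd W β n)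

theorem exists_ginv {A B : Type} [AddCommGroup A] [Module ℝ A] [AddCommGroup B] [Module ℝ B]
    (d : A →ₗ[ℝ] B) : ∃ s : B →ₗ[ℝ] A, ∀ x, d (s (d x)) = d x := by
  obtain ⟨r, hr⟩ := d.rangeRestrict.exists_rightInverse_of_surjective d.range_rangeRestrict
  obtain ⟨g, hg⟩ := r.exists_extend
  refine ⟨g, fun x => ?_⟩
  have h1 : g (d x) = r (d.rangeRestrict x) := by
    rw [← hg]; rfl
  rw [h1]
  exact congrArg Subtype.val (LinearMap.congr_fun hr (d.rangeRestrict x))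

theorem exists_sdr (W : ℕ → Type) [∀ p, AddCommGroup (W p)] [∀ p, Module ℝ (W p)]
    (d : ∀ p, W p →ₗ[ℝ] W (p + 1)) (hd : ∀ p, (d (p + 1)).comp (d p) = 0) :
    ∃ (i : ∀ p, Hcoh W d p →ₗ[ℝ] W p) (π : ∀ p, W p →ₗ[ℝ] Hcoh W d p)
      (h : ∀ p, W (p + 1) →ₗ[ℝ] W p),
      (∀ p x, π p (i p x) = x) ∧ (∀ p x, d p (i p x) = 0) ∧
      (∀ p x, π (p + 1) (d p x) = 0) ∧
      (∀ x, x = i 0 (π 0 x) + h 0 (d 0 x)) ∧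
      (∀ p x, x = i (p + 1) (π (p + 1) x) + d p (h p x) + h (p + 1) (d (p + 1) x)) := by
  have hd' : ∀ p x, d (p + 1) (d p x) = 0 := fun p x => LinearMap.congr_fun (hd p) x
  choose s hs using fun p => exists_ginv (d p)
  let u : ∀ p, W p →ₗ[ℝ] W p := fun p => match p with
    | 0 => 0
    | p + 1 => (d p).comp (s p)
  have hu0 : ∀ x, u 0 x = 0 := fun x => rfl
  have hu1 : ∀ p x, u (p + 1) x = d p (s p x) := fun p x => rfl
  have huB : ∀ p x, u p x ∈ Bnd W d p := by
    intro p x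
    cases p with
    | zero => exact Submodule.zero_mem _
    | succ p => exact ⟨s p x, rfl⟩
  have hdu : ∀ p x, d p (u p x) = 0 := by
    intro p x
    cases p with
    | zero => simp [hu0]
    | succ p => rw [hu1, hd']
  have huBnd : ∀ p x, x ∈ Bnd W d p → u p x = x ∧ d p x = 0 := by
    intro p x hx
    cases p with
    | zero =>
      have : x = 0 := hx
      subst this; simp
    | succ p =>
      obtain ⟨y, rfl⟩ := hx
      exact ⟨by rw [hu1, hs], hd' _ _⟩
  let e : ∀ p, W p →ₗ[ℝ] W p := fun p => LinearMap.id - u p - (s p).comp (d p)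
  have he : ∀ p x, e p x = x - u p x - s p (d p x) := fun p x => rfl
  have hde : ∀ p x, d p (e p x) = 0 := by
    intro p x
    simp [he, hdu, hs]
  have heB : ∀ p x, x ∈ Bnd W d p → e p x = 0 := by
    intro p x hx
    obtain ⟨h1, h2⟩ := huBnd p x hx
    simp [he, h1, h2]
  have hed : ∀ p x, e (p + 1) (d p x) = 0 := fun p x => heB (p + 1) _ ⟨x, rfl⟩
  let i : ∀ p, Hcoh W d p →ₗ[ℝ] W p := fun p =>
    Submodule.liftQ _ ((e p).comp (LinearMap.ker (d p)).subtype) (by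
      intro z hz
      exact heB p _ hz)
  let π : ∀ p, W p →ₗ[ℝ] Hcoh W d p := fun p =>
    (Submodule.mkQ _).comp (LinearMap.codRestrict (LinearMap.ker (d p)) (e p) (hde p))
  have hiπ : ∀ p x, i p (π p x) = e p (e p x) := fun p x => rfl
  have hee : ∀ p x, e p (e p x) = e p x - u p (e p x) := by
    intro p x
    rw [he p (e p x), hde]; simp
  refine ⟨i, π, fun p => (s p).comp (LinearMap.id + e (p + 1)), ?_, ?_, ?_, ?_, ?_⟩
  · intro p x
    obtain ⟨z, rfl⟩ := Submodule.mkQ_surjective _ x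
    have hz : d p z = 0 := z.2
    refine (Submodule.Quotient.eq _).2 ?_
    change e p (e p z) - (z : W p) ∈ Bnd W d p
    have : e p (e p z) - (z : W p) = - (u p z + u p (e p z)) := by
      rw [hee, he p z, hz]; simp; abel
    rw [this]
    exact Submodule.neg_mem _ (Submodule.add_mem _ (huB _ _) (huB _ _))
  · intro p x
    obtain ⟨z, rfl⟩ := Submodule.mkQ_surjective _ x
    exact hde p z
  · intro p x
    change Submodule.Quotient.mk _ = _
    rw [Submodule.Quotient.mk_eq_zero]
    change e (p + 1) (d p x) ∈ Bnd W d (p + 1)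
    rw [hed]; exact Submodule.zero_mem _
  · intro x
    rw [hiπ, hee]
    simp [hu0, hed]
    rw [he, hu0]; abel
  · intro p x
    rw [hiπ, hee]
    simp [hu1, hed]
    rw [he (p + 1) x, hu1]; abel

theorem hcoh_equiv (W : ℕ → Type) [∀ p, AddCommGroup (W p)] [∀ p, Module ℝ (W p)]
    (d : ∀ p, W p →ₗ[ℝ] W (p + 1)) (n : ℕ) (M : Type) [AddCommGroup M] [Module ℝ M]
    (i : M →ₗ[ℝ] W n) (π : W n →ₗ[ℝ] M) (h1 : ∀ x, π (i x) = x) (h2 : ∀ x, d n (i x) = 0)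
    (h3 : ∀ x ∈ Bnd W d n, π x = 0) (h4 : ∀ x, d n x = 0 → x - i (π x) ∈ Bnd W d n) :
    Nonempty (Hcoh W d n ≃ₗ[ℝ] M) := by
  refine ⟨LinearEquiv.ofLinearMap
    (Submodule.liftQ _ (π.comp (LinearMap.ker (d n)).subtype) (fun z hz => h3 _ hz))
    ((Submodule.mkQ _).comp (LinearMap.codRestrict (LinearMap.ker (d n)) i h2)) ?_ ?_⟩
  · ext x
    exact h1 x
  · ext x
    refine ((Submodule.Quotient.eq _).2 ?_).symm
    exact h4 x x.2

section
variable {V₁ V₂}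

noncomputable def tK (e : ∀ p, V₁ p →ₗ[ℝ] V₁ p) (h₁ : ∀ p, V₁ (p + 1) →ₗ[ℝ] V₁ p)
    (h₂ : ∀ p, V₂ (p + 1) →ₗ[ℝ] V₂ p) (n : ℕ) :
    TObj V₁ V₂ (n + 1) →ₗ[ℝ] TObj V₁ V₂ n :=
  DirectSum.toModule ℝ (TIdx (n + 1)) (TObj V₁ V₂ n) fun pq =>
    (match pq with
      | ⟨(0, _), _⟩ => 0
      | ⟨(p + 1, q), hpq⟩ =>
        (DirectSum.lof ℝ (TIdx n) (fun rs => V₁ rs.1.1 ⊗[ℝ] V₂ rs.1.2)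
          ⟨(p, q), by simp only at hpq ⊢; omega⟩).comp
          (TensorProduct.map (h₁ p) LinearMap.id))
    + (match pq with
      | ⟨(_, 0), _⟩ => 0
      | ⟨(p, q + 1), hpq⟩ => ((-1 : ℝ) ^ p) •
        (DirectSum.lof ℝ (TIdx n) (fun rs => V₁ rs.1.1 ⊗[ℝ] V₂ rs.1.2)
          ⟨(p, q), by simp only at hpq ⊢; omega⟩).comp
          (TensorProduct.map (e p) (h₂ q)))

noncomputable def tin {n : ℕ} (p q : ℕ) (h : p + q = n) (x : V₁ p) (y : V₂ q) : TObj V₁ V₂ n :=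
  DirectSum.lof ℝ (TIdx n) (fun rs => V₁ rs.1.1 ⊗[ℝ] V₂ rs.1.2) ⟨(p, q), h⟩ (x ⊗ₜ y)

theorem tin_add_left {n : ℕ} (p q : ℕ) (h : p + q = n) (x x' : V₁ p) (y : V₂ q) :
    tin p q h (x + x') y = tin p q h x y + tin p q h x' y := by
  simp [tin, TensorProduct.add_tmul]
theorem tin_add_right {n : ℕ} (p q : ℕ) (h : p + q = n) (x : V₁ p) (y y' : V₂ q) :
    tin p q h x (y + y') = tin p q h x y + tin p q h x y' := by
  simp [tin, TensorProduct.tmul_add]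
theorem tin_zero_left {n : ℕ} (p q : ℕ) (h : p + q = n) (y : V₂ q) :
    tin p q h (0 : V₁ p) y = 0 := by
  simp [tin]
theorem tin_zero_right {n : ℕ} (p q : ℕ) (h : p + q = n) (x : V₁ p) :
    tin p q h x (0 : V₂ q) = 0 := by
  simp [tin]

theorem tAlpha_tin (α₁ : ∀ p, V₁ p →ₗ[ℝ] V₁ (p + 1)) (α₂ : ∀ p, V₂ p →ₗ[ℝ] V₂ (p + 1))
    {n p q : ℕ} (h : p + q = n) (x : V₁ p) (y : V₂ q) :
    tAlpha V₁ V₂ α₁ α₂ n (tin p q h x y) =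
      tin (p + 1) q (by omega) (α₁ p x) y
      + ((-1 : ℝ) ^ p) • tin p (q + 1) (by omega) x (α₂ q y) := by
  unfold tAlpha tin
  rw [DirectSum.toModule_lof]
  rfl

variable (e : ∀ p, V₁ p →ₗ[ℝ] V₁ p) (h₁ : ∀ p, V₁ (p + 1) →ₗ[ℝ] V₁ p)
    (h₂ : ∀ p, V₂ (p + 1) →ₗ[ℝ] V₂ p)

theorem tK_tin_01 {n q : ℕ} (h : 0 + (q + 1) = n + 1) (x : V₁ 0) (y : V₂ (q + 1)) :
    tK e h₁ h₂ n (tin 0 (q + 1) h x y) = tin 0 q (by omega) (e 0 x) (h₂ q y) := by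
  unfold tK tin
  rw [DirectSum.toModule_lof]
  simp

theorem tK_tin_10 {n p : ℕ} (h : p + 1 + 0 = n + 1) (x : V₁ (p + 1)) (y : V₂ 0) :
    tK e h₁ h₂ n (tin (p + 1) 0 h x y) = tin p 0 (by omega) (h₁ p x) y := by
  unfold tK tin
  rw [DirectSum.toModule_lof]
  simp

theorem tK_tin_11 {n p q : ℕ} (h : p + 1 + (q + 1) = n + 1) (x : V₁ (p + 1)) (y : V₂ (q + 1)) :
    tK e h₁ h₂ n (tin (p + 1) (q + 1) h x y) = tin p (q + 1) (by omega) (h₁ p x) y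
      + ((-1 : ℝ) ^ (p + 1)) • tin (p + 1) q (by omega) (e (p + 1) x) (h₂ q y) := by
  unfold tK tin
  rw [DirectSum.toModule_lof]
  rfl

theorem tobj_ext {n : ℕ} {M : Type} [AddCommGroup M] [Module ℝ M] {f g : TObj V₁ V₂ n →ₗ[ℝ] M}
    (H : ∀ p q h x y, f (tin p q h x y) = g (tin p q h x y)) : f = g := by
  refine DirectSum.linearMap_ext ℝ fun ⟨⟨p, q⟩, h⟩ => ?_
  refine TensorProduct.ext' fun x y => H p q h x y

end

set_option maxHeartbeats 2000000 in
/-- **Künneth formula**: if `(V₁, α₁)` and `(V₂, α₂)` are cochain complexes of real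
vector spaces and `(V, α)` is their tensor product complex, then for every `n` there is
a linear isomorphism `H^n(V) ≅ ⊕_{p+q=n} H^p(V₁) ⊗ H^q(V₂)`. -/
theorem stmt6 (α₁ : ∀ p, V₁ p →ₗ[ℝ] V₁ (p + 1)) (α₂ : ∀ p, V₂ p →ₗ[ℝ] V₂ (p + 1))
    (hα₁ : ∀ p, (α₁ (p + 1)).comp (α₁ p) = 0) (hα₂ : ∀ p, (α₂ (p + 1)).comp (α₂ p) = 0)
    (n : ℕ) :
    Nonempty (Hcoh (TObj V₁ V₂) (tAlpha V₁ V₂ α₁ α₂) n ≃ₗ[ℝ]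
      ⨁ pq : TIdx n, (Hcoh V₁ α₁ pq.1.1 ⊗[ℝ] Hcoh V₂ α₂ pq.1.2)) := by
  obtain ⟨i₁, π₁, h₁, a1, a2, a3, a4, a5⟩ := exists_sdr V₁ α₁ hα₁
  obtain ⟨i₂, π₂, h₂, b1, b2, b3, b4, b5⟩ := exists_sdr V₂ α₂ hα₂
  let e₁ : ∀ p, V₁ p →ₗ[ℝ] V₁ p := fun p => (i₁ p).comp (π₁ p)
  let I : ∀ n, (⨁ pq : TIdx n, (Hcoh V₁ α₁ pq.1.1 ⊗[ℝ] Hcoh V₂ α₂ pq.1.2)) →ₗ[ℝ]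
      TObj V₁ V₂ n := fun n => DirectSum.lmap fun pq => TensorProduct.map (i₁ pq.1.1) (i₂ pq.1.2)
  let P : ∀ n, TObj V₁ V₂ n →ₗ[ℝ]
      (⨁ pq : TIdx n, (Hcoh V₁ α₁ pq.1.1 ⊗[ℝ] Hcoh V₂ α₂ pq.1.2)) :=
    fun n => DirectSum.lmap fun pq => TensorProduct.map (π₁ pq.1.1) (π₂ pq.1.2)
  have hI : ∀ n p q h x y, I n (tin p q h x y) = tin p q h (i₁ p x) (i₂ q y) := by
    intro n p q h x y
    simp only [I, tin]
    rw [DirectSum.lmap_lof]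
    rfl
  have hP : ∀ n p q h x y, P n (tin p q h x y) =
      tin (V₁ := Hcoh V₁ α₁) (V₂ := Hcoh V₂ α₂) p q h (π₁ p x) (π₂ q y) := by
    intro n p q h x y
    simp only [P, tin]
    rw [DirectSum.lmap_lof]
    rfl
  have hPI : (P n).comp (I n) = LinearMap.id := by
    refine tobj_ext (V₁ := Hcoh V₁ α₁) (V₂ := Hcoh V₂ α₂)
      (M := TObj (Hcoh V₁ α₁) (Hcoh V₂ α₂) n) fun p q h x y => ?_
    simp only [LinearMap.comp_apply, LinearMap.id_apply]
    rw [hI, hP, a1, b1]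
  have hDI : (tAlpha V₁ V₂ α₁ α₂ n).comp (I n) = 0 := by
    refine tobj_ext (V₁ := Hcoh V₁ α₁) (V₂ := Hcoh V₂ α₂) (M := TObj V₁ V₂ (n + 1))
      fun p q h x y => ?_
    simp only [LinearMap.comp_apply]
    rw [hI, tAlpha_tin, a2, b2, tin_zero_left, tin_zero_right]
    simp
  have hPD : ∀ n, (P (n + 1)).comp (tAlpha V₁ V₂ α₁ α₂ n) = 0 := by
    intro n
    refine tobj_ext (V₁ := V₁) (V₂ := V₂)
      (M := TObj (Hcoh V₁ α₁) (Hcoh V₂ α₂) (n + 1)) fun p q h x y => ?_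
    simp only [LinearMap.comp_apply]
    rw [tAlpha_tin, map_add, map_smul, hP, hP, a3, b3, tin_zero_left, tin_zero_right]
    simp
  have ha3 : ∀ p x, e₁ (p + 1) (α₁ p x) = 0 := fun p x => by simp [e₁, a3]
  have ha2 : ∀ p x, α₁ p (e₁ p x) = 0 := fun p x => by simp [e₁, a2]
  have hcon0 : (LinearMap.id : TObj V₁ V₂ 0 →ₗ[ℝ] _) =
      (I 0).comp (P 0) + (tK e₁ h₁ h₂ 0).comp (tAlpha V₁ V₂ α₁ α₂ 0) := by
    refine tobj_ext fun p q h x y => ?_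
    obtain rfl : p = 0 := by omega
    obtain rfl : q = 0 := by omega
    simp only [LinearMap.comp_apply, LinearMap.id_apply, LinearMap.add_apply]
    rw [hP, hI, tAlpha_tin, map_add, map_smul, tK_tin_10, tK_tin_01]
    conv_lhs => rw [a4 x, tin_add_left]
    conv_lhs => enter [1]; rw [b4 y, tin_add_right]
    simp [e₁]
    abel
  have hcon1 : ∀ n, (LinearMap.id : TObj V₁ V₂ (n + 1) →ₗ[ℝ] _) =
      (I (n + 1)).comp (P (n + 1)) + (tAlpha V₁ V₂ α₁ α₂ n).comp (tK e₁ h₁ h₂ n)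
        + (tK e₁ h₁ h₂ (n + 1)).comp (tAlpha V₁ V₂ α₁ α₂ (n + 1)) := by
    intro n
    refine tobj_ext fun p q h x y => ?_
    simp only [LinearMap.comp_apply, LinearMap.id_apply, LinearMap.add_apply]
    rw [hP, hI, tAlpha_tin, map_add, map_smul]
    rcases p with _ | p <;> rcases q with _ | q
    · omega
    · rw [tK_tin_11, tK_tin_01, tK_tin_01, tAlpha_tin, ha2, ha3, tin_zero_left]
      conv_lhs => rw [a4 x, tin_add_left]
      conv_lhs => enter [1]; rw [b5 q y, tin_add_right, tin_add_right]
      simp [e₁]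
      abel
    · rw [tK_tin_10, tK_tin_10, tK_tin_11, tAlpha_tin]
      conv_lhs => rw [a5 p x, tin_add_left, tin_add_left]
      conv_lhs => enter [1, 1]; rw [b4 y, tin_add_right]
      rcases neg_one_pow_eq_or ℝ p with hs | hs <;>
      · simp only [e₁, LinearMap.comp_apply, pow_succ, hs]
        module
    · rw [tK_tin_11, tK_tin_11, tK_tin_11, map_add, map_smul, tAlpha_tin, tAlpha_tin, ha2, ha3,
        tin_zero_left]
      conv_lhs => rw [a5 p x, tin_add_left, tin_add_left]
      conv_lhs => enter [1, 1]; rw [b5 q y, tin_add_right, tin_add_right]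
      rcases neg_one_pow_eq_or ℝ p with hs | hs <;>
      · simp only [e₁, LinearMap.comp_apply, pow_succ, hs]
        module
  refine hcoh_equiv (TObj V₁ V₂) (tAlpha V₁ V₂ α₁ α₂) n
    (TObj (Hcoh V₁ α₁) (Hcoh V₂ α₂) n) (I n) (P n)
    (fun x => LinearMap.congr_fun hPI x) (fun x => LinearMap.congr_fun hDI x) ?_ ?_
  · intro x hx
    cases n with
    | zero =>
      have : x = 0 := hx
      rw [this, map_zero]
    | succ n =>
      obtain ⟨y, rfl⟩ := hx
      exact LinearMap.congr_fun (hPD n) y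
  · intro x hx
    cases n with
    | zero =>
      have := LinearMap.congr_fun hcon0 x
      simp only [LinearMap.comp_apply, LinearMap.id_apply, LinearMap.add_apply, hx, map_zero,
        add_zero] at this
      rw [← this, sub_self]
      exact Submodule.zero_mem _
    | succ n =>
      have := LinearMap.congr_fun (hcon1 n) x
      simp only [LinearMap.comp_apply, LinearMap.id_apply, LinearMap.add_apply, hx, map_zero,
        add_zero] at this
      exact ⟨tK e₁ h₁ h₂ n x, (sub_eq_of_eq_add' this).symm⟩
end

section
/- Counting lemma for interior invariants (core of Lemma 4.4): let m, k, ℓ, p be natural numbers. Suppose given multi-indices α : Fin ℓ → (Fin m → ℕ) with |α i| := Σ_μ (α i)(μ) ≥ 2 for every i, multi-indices β : Fin p → (Fin m → ℕ), and index labels a, b : Fin ℓ → Fin m and c : Fin p → Fin m. For μ ∈ Fin m set deg μ := Σ_{i} ((if a i = μ then 1 else 0) + (if b i = μ then 1 else 0) + (α i)(μ)) + Σ_{j} ((if c j = μ then 1 else 0) + (β j)(μ)). Assume the total order satisfies Σ_i |α i| + Σ_j (1 + |β j|) = 2k and that deg μ ≥ 2 for every μ ∈ Fin m. Then m ≤ 2k;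 moreover, if m = 2k then p = 0. -/
/-- **Counting lemma for interior invariants** (core of Lemma 4.4 of
Álvarez-López–Gilkey, "The local index density of the perturbed de Rham complex").
For a monomial `A = g_{a₁b₁/α₁} ⋯ g_{aₗbₗ/αₗ} Θ_{c₁/β₁} ⋯ Θ_{c_p/β_p}` of total weight `2k`,
where every metric jet variable has order `|αᵢ| ≥ 2`, if every index `μ` occurs at least
twice in `A`, then `m ≤ 2k`; and if moreover `m = 2k`, then no `Θ`-variables occur (`p = 0`). -/
theorem stmt8 (m k ℓ p : ℕ)
    (α : Fin ℓ → (Fin m → ℕ)) (a b : Fin ℓ → Fin m)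
    (β : Fin p → (Fin m → ℕ)) (c : Fin p → Fin m)
    (hα : ∀ i, 2 ≤ ∑ μ, α i μ)
    (deg : Fin m → ℕ)
    (hdeg_def : ∀ μ, deg μ =
      (∑ i, ((if a i = μ then 1 else 0) + (if b i = μ then 1 else 0) + α i μ)) +
      (∑ j, ((if c j = μ then 1 else 0) + β j μ)))
    (horder : (∑ i, ∑ μ, α i μ) + (∑ j, (1 + ∑ μ, β j μ)) = 2 * k)
    (hdeg : ∀ μ, 2 ≤ deg μ) :
    m ≤ 2 * k ∧ (m = 2 * k → p = 0) := by
  have h1 : ∑ _μ : Fin m, 2 ≤ ∑ μ, deg μ := Finset.sum_le_sum fun μ _ => hdeg μ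
  have h2 : ∑ _i : Fin ℓ, 2 ≤ ∑ i, ∑ μ, α i μ := Finset.sum_le_sum fun i _ => hα i
  have h3 : ∑ μ, deg μ = (ℓ + ℓ + ∑ i, ∑ μ, α i μ) + (p + ∑ j, ∑ μ, β j μ) := by
    simp_rw [hdeg_def]
    rw [Finset.sum_add_distrib, Finset.sum_comm, Finset.sum_comm (γ := Fin m) (α := Fin p)]
    simp [Finset.sum_add_distrib]
    omega
  rw [Finset.sum_add_distrib] at horder
  simp only [Finset.sum_const, Finset.card_univ, Fintype.card_fin, smul_eq_mul] at h1 h2 horder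
  omega
end

section
/- Counting lemma for boundary invariants (core of Lemma 4.7): let m ≥ 1 and n, ℓ, p, q be natural numbers. Suppose given multi-indices α : Fin ℓ → (Fin m → ℕ) with |α i| ≥ 2 for every i, multi-indices β : Fin p → (Fin m → ℕ), index labels a, b : Fin ℓ → Fin m and c : Fin p → Fin m, and tangential index labels d, e : Fin q → Fin m with d r ≠ m−1 and e r ≠ m−1 for all r (the index m−1 plays the role of the inward normal). For a tangential index μ ∈ Fin m with μ ≠ m−1 set deg μ := Σ_i ((if a i = μ then 1 else 0) + (if b i = μ then 1 else 0) + (α i)(μ)) + Σ_j ((if c j = μ then 1 else 0) + (β j)(μ)) + Σ_r ((if d r = μ then 1 else 0) + (if e r = μ then 1 else 0)). Assume n = Σ_i |α i| + Σ_j (1 + |β j|) + q and deg μ ≥ 2 for every tangential μ. Then m − 1 ≤ n; moreover, if n = m − 1 then p = 0. -/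
/-- **Counting lemma for boundary invariants** (core of Lemma 4.7 of
Álvarez-López–Gilkey). For a monomial built from metric jet variables `g_{aᵢbᵢ/αᵢ}` of
order `|αᵢ| ≥ 2`, 1-form jet variables `Θ_{cⱼ/βⱼ}` of order `1+|βⱼ|`, and `q`
second-fundamental-form variables `g_{dᵣeᵣ/m}` of order `1` with tangential free indices
(`d r ≠ m-1`, `e r ≠ m-1`, the index `m-1` playing the role of the inward normal),
of total order `n`, if every tangential index `μ ≠ m-1` occurs at least twice, then
`m - 1 ≤ n`; and if moreover `n = m - 1`, then no `Θ`-variables occur (`p = 0`). -/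
theorem stmt9 (m n ℓ p q : ℕ) (hm : 1 ≤ m)
    (α : Fin ℓ → (Fin m → ℕ)) (a b : Fin ℓ → Fin m)
    (β : Fin p → (Fin m → ℕ)) (c : Fin p → Fin m)
    (d e : Fin q → Fin m)
    (hα : ∀ i, 2 ≤ ∑ μ, α i μ)
    (hd : ∀ r, (d r : ℕ) ≠ m - 1) (he : ∀ r, (e r : ℕ) ≠ m - 1)
    (deg : Fin m → ℕ)
    (hdeg_def : ∀ μ, deg μ =
      (∑ i, ((if a i = μ then 1 else 0) + (if b i = μ then 1 else 0) + α i μ)) +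
      (∑ j, ((if c j = μ then 1 else 0) + β j μ)) +
      (∑ r, ((if d r = μ then 1 else 0) + (if e r = μ then 1 else 0))))
    (horder : n = (∑ i, ∑ μ, α i μ) + (∑ j, (1 + ∑ μ, β j μ)) + q)
    (hdeg : ∀ μ : Fin m, (μ : ℕ) ≠ m - 1 → 2 ≤ deg μ) :
    m - 1 ≤ n ∧ (n = m - 1 → p = 0) := by
  have hsum : ∑ μ, deg μ = 2 * ℓ + (∑ i, ∑ μ, α i μ) + (p + ∑ j, ∑ μ, β j μ) + 2 * q := by
    simp only [hdeg_def, Finset.sum_add_distrib]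
    rw [Finset.sum_comm (f := fun μ i => α i μ), Finset.sum_comm (f := fun μ j => β j μ),
      Finset.sum_comm (f := fun μ i => if a i = μ then 1 else 0),
      Finset.sum_comm (f := fun μ i => if b i = μ then 1 else 0),
      Finset.sum_comm (f := fun μ i => if c i = μ then 1 else 0),
      Finset.sum_comm (f := fun μ i => if d i = μ then 1 else 0),
      Finset.sum_comm (f := fun μ i => if e i = μ then 1 else 0)]
    simp
    ring
  have hA : 2 * ℓ ≤ ∑ i, ∑ μ, α i μ := by
    have h := Finset.sum_le_sum (s := Finset.univ) (fun i _ => hα i)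
    simp at h
    omega
  have hlow : 2 * (m - 1) ≤ ∑ μ, deg μ := by
    obtain ⟨k, rfl⟩ : ∃ k, m = k + 1 := ⟨m - 1, by omega⟩
    rw [Fin.sum_univ_castSucc]
    have h : ∑ _i : Fin k, 2 ≤ ∑ i : Fin k, deg i.castSucc :=
      Finset.sum_le_sum (fun i _ => hdeg _ (by simp; omega))
    simp at h
    simp only [Nat.add_sub_cancel]
    omega
  have hB : ∑ j, (1 + ∑ μ, β j μ) = p + ∑ j, ∑ μ, β j μ := by
    simp [Finset.sum_add_distrib]
  rw [hB] at horder
  constructor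
  · omega
  · intro h
    omega
end
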